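/- Let W = (W_t)_{t≥0} be a standard one-dimensional Brownian motion and let (L_t(x))_{t≥0,x∈ℝ} be a Brownian local time (occupation density) for W. Fix t > 0 and a ∈ ℝ. Then the distribution of the random variable L_t(a) on the open half-line (0,∞) has density g(y; t, a) = √(2/(π t)) · exp( −(y + |a|)² / (2t) ) with respect to Lebesgue measure; that is, for every Borel set A ⊆ (0,∞), P( L_t(a) ∈ A ) = ∫_A √(2/(π t)) exp( −(y + |a|)²/(2t) ) dy. -/

import Mathlib

open MeasureTheory ProbabilityTheory Filter Set
open scoped ENNReal NNReal

/-- `W` is a standard one-dimensional Brownian motion on `(Ω, F, P)`: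
`W 0 = 0`, measurable coordinates, a.s. continuous paths, Gaussian increments
`W t - W s ~ N(0, t - s)` and independent increments. -/
structure IsBrownianMotion {Ω : Type*} [MeasurableSpace Ω] (P : Measure Ω)
    (W : ℝ → Ω → ℝ) : Prop where
  isProb : IsProbabilityMeasure P
  init : ∀ ω, W 0 ω = 0
  meas : ∀ t, Measurable (W t)
  cont : ∀ᵐ ω ∂P, Continuous fun t => W t ω
  incr_law : ∀ s t : ℝ, 0 ≤ s → s ≤ t →
    Measure.map (fun ω => W t ω - W s ω) P = gaussianReal 0 (Real.toNNReal (t - s))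
  indep_incr : ∀ (n : ℕ) (t : Fin (n + 1) → ℝ), Monotone t → 0 ≤ t 0 →
    iIndepFun
      (fun i : Fin n => fun ω => W (t i.succ) ω - W (t i.castSucc) ω) P

/-- `L` is a Brownian local time (occupation density) for `W`: a nonnegative
random field, jointly continuous in `(t, x)` almost surely, such that almost
surely, for every `t ≥ 0` and every Borel set `B ⊆ ℝ`,
`∫_0^t 1_B (W_s) ds = ∫_B L_t(x) dx`. -/
structure IsLocalTime {Ω : Type*} [MeasurableSpace Ω] (P : Measure Ω)
    (W : ℝ → Ω → ℝ) (L : ℝ → ℝ → Ω → ℝ) : Prop where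
  nonneg : ∀ t x ω, 0 ≤ L t x ω
  meas : ∀ t x, Measurable fun ω => L t x ω
  cont : ∀ᵐ ω ∂P, Continuous fun p : ℝ × ℝ => L p.1 p.2 ω
  occupation : ∀ᵐ ω ∂P, ∀ t : ℝ, 0 ≤ t → ∀ B : Set ℝ, MeasurableSet B →
    ∫⁻ s in Icc (0 : ℝ) t, B.indicator (fun _ => (1 : ℝ≥0∞)) (W s ω) =
      ∫⁻ x in B, ENNReal.ofReal (L t x ω)

/-- Heat kernel. -/
noncomputable def pk (r z : ℝ) : ℝ := (√(2 * Real.pi * r))⁻¹ * Real.exp (-z ^ 2 / (2 * r))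

/-- Heat kernel as an extended nonnegative number. -/
noncomputable def qk (r z : ℝ) : ℝ≥0∞ := ENNReal.ofReal (pk r z)

lemma pk_nonneg (r z : ℝ) : 0 ≤ pk r z := by unfold pk; positivity

lemma measurable_pk : Measurable (fun p : ℝ × ℝ => pk p.1 p.2) := by
  unfold pk; fun_prop

lemma measurable_qk : Measurable (fun p : ℝ × ℝ => qk p.1 p.2) :=
  measurable_pk.ennreal_ofReal

lemma pk_mul_pk {t s : ℝ} (hs : 0 < s) (hst : s < t) (B C : ℝ) :
    pk s B * pk (t - s) C = (2 * Real.pi * (√s * √(t - s)))⁻¹ *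
      (Real.exp (-(B + C) ^ 2 / (2 * t)) *
        Real.exp (-(B * (√(t - s) / √s) - C * (√s / √(t - s))) ^ 2 / (2 * t))) := by
  have h1 : 0 < t - s := by linarith
  have ht : 0 < t := by linarith
  have ha : 0 < √s := Real.sqrt_pos.2 hs
  have hb : 0 < √(t - s) := Real.sqrt_pos.2 h1
  have ha2 : √s ^ 2 = s := Real.sq_sqrt hs.le
  have hb2 : √(t - s) ^ 2 = t - s := Real.sq_sqrt h1.le
  unfold pk
  rw [mul_mul_mul_comm, ← Real.exp_add, ← Real.exp_add]
  congr 1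
  · rw [Real.sqrt_mul (x := 2 * Real.pi) (by positivity) s,
      Real.sqrt_mul (x := 2 * Real.pi) (by positivity) (t - s), ← mul_inv]
    congr 1
    have : √(2 * Real.pi) * √(2 * Real.pi) = 2 * Real.pi := Real.mul_self_sqrt (by positivity)
    linear_combination (√s * √(t-s)) * this
  · congr 1
    set α := √s
    set β := √(t - s)
    have e1 : s = α ^ 2 := ha2.symm
    have e2 : t = α ^ 2 + β ^ 2 := by linarith
    have e3 : t - s = β ^ 2 := hb2.symm
    rw [e3, e1, e2]
    field_simp
    ring

lemma key_inner {t B C : ℝ} (ht : 0 < t) (hB : 0 < B) (hC : 0 < C) :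
    ∫⁻ s in Ioo 0 t, ENNReal.ofReal ((B / s + C / (t - s)) * (pk s B * pk (t - s) C)) =
      ENNReal.ofReal (2 * pk t (B + C)) := by
  let w : ℝ → ℝ := fun s => B * (√(t - s) / √s) - C * (√s / √(t - s))
  let w' : ℝ → ℝ := fun s => -(t / (2 * (√s * √(t - s))) * (B / s + C / (t - s)))
  have hw : ∀ s ∈ Ioo 0 t, HasDerivAt w (w' s) s := by
    intro s ⟨hs, hst⟩
    have h1 : 0 < t - s := by linarith
    have ha : 0 < √s := Real.sqrt_pos.2 hs
    have hb : 0 < √(t - s) := Real.sqrt_pos.2 h1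
    have d1 : HasDerivAt (fun s : ℝ => √s) (1 / (2 * √s)) s := (hasDerivAt_id s).sqrt hs.ne'
    have d2 : HasDerivAt (fun s : ℝ => √(t - s)) ((-1) / (2 * √(t - s))) s :=
      ((hasDerivAt_id s).const_sub t).sqrt h1.ne'
    have := ((d2.div d1 ha.ne').const_mul B).sub ((d1.div d2 hb.ne').const_mul C)
    refine this.congr_deriv ?_
    have ha2 : √s ^ 2 = s := Real.sq_sqrt hs.le
    have hb2 : √(t - s) ^ 2 = t - s := Real.sq_sqrt h1.le
    simp only [w']
    set α := √s
    set β := √(t - s)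
    have e1 : s = α ^ 2 := ha2.symm
    have e2 : t = α ^ 2 + β ^ 2 := by linarith
    have e3 : t - s = β ^ 2 := hb2.symm
    rw [e3, e1, e2]
    field_simp
    ring
  have hneg : ∀ s ∈ Ioo 0 t, w' s < 0 := by
    intro s ⟨hs, hst⟩
    have h1 : 0 < t - s := by linarith
    simp only [w']
    have : 0 < t / (2 * (√s * √(t - s))) * (B / s + C / (t - s)) := by positivity
    linarith
  have hanti : StrictAntiOn w (Ioo 0 t) := by
    apply strictAntiOn_of_deriv_neg (convex_Ioo 0 t)
    · intro s hs
      exact (hw s hs).continuousAt.continuousWithinAt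
    · intro s hs
      rw [interior_Ioo] at hs
      rw [(hw s hs).deriv]
      exact hneg s hs
  have himg : w '' Ioo 0 t = univ := by
    refine eq_univ_of_forall fun y => ?_
    set v := (y + √(y ^ 2 + 4 * B * C)) / (2 * B) with hv
    have hsq : √(y ^ 2 + 4 * B * C) ^ 2 = y ^ 2 + 4 * B * C := Real.sq_sqrt (by positivity)
    have hgt : |y| < √(y ^ 2 + 4 * B * C) := by
      apply Real.lt_sqrt_of_sq_lt
      rw [sq_abs]; nlinarith [mul_pos hB hC]
    have hvpos : 0 < v := by
      have := neg_abs_le y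
      apply div_pos <;> linarith
    have hveq : B * v - C / v = y := by
      have : B * v ^ 2 - y * v - C = 0 := by
        rw [hv]
        generalize √(y ^ 2 + 4 * B * C) = R at hsq
        field_simp
        linear_combination hsq
      field_simp
      linarith
    refine ⟨t / (1 + v ^ 2), ⟨by positivity, ?_⟩, ?_⟩
    · rw [div_lt_iff₀ (by positivity)]
      nlinarith [pow_pos hvpos 2]
    · have e1 : t - t / (1 + v ^ 2) = v ^ 2 * (t / (1 + v ^ 2)) := by field_simp; ring
      have h2 : √(t - t / (1 + v ^ 2)) = v * √(t / (1 + v ^ 2)) := by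
        rw [e1, Real.sqrt_mul (by positivity), Real.sqrt_sq hvpos.le]
      have h3 : 0 < √(t / (1 + v ^ 2)) := Real.sqrt_pos.2 (by positivity)
      simp only [w]
      rw [h2, ← hveq]
      field_simp
  let g : ℝ → ℝ≥0∞ := fun y =>
    ENNReal.ofReal ((Real.pi * t)⁻¹ * (Real.exp (-(B + C) ^ 2 / (2 * t)) *
      Real.exp (-y ^ 2 / (2 * t))))
  have hcv := lintegral_image_eq_lintegral_abs_deriv_mul (measurableSet_Ioo (a := 0) (b := t))
    (fun s hs => (hw s hs).hasDerivWithinAt) hanti.injOn g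
  have hL : ∫⁻ s in Ioo 0 t, ENNReal.ofReal ((B / s + C / (t - s)) * (pk s B * pk (t - s) C)) =
      ∫⁻ s in Ioo 0 t, ENNReal.ofReal |w' s| * g (w s) := by
    refine setLIntegral_congr_fun measurableSet_Ioo fun s hs => ?_
    rw [pk_mul_pk hs.1 hs.2, abs_of_neg (hneg s hs)]
    simp only [g]
    rw [← ENNReal.ofReal_mul (by linarith [hneg s hs])]
    congr 1
    have h1 : 0 < t - s := by linarith [hs.2]
    have ha : 0 < √s := Real.sqrt_pos.2 hs.1
    have hb : 0 < √(t - s) := Real.sqrt_pos.2 h1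
    have hpi := Real.pi_pos
    simp only [w', w]
    generalize Real.exp (-(B * (√(t - s) / √s) - C * (√s / √(t - s))) ^ 2 / (2 * t)) = E1
    generalize Real.exp (-(B + C) ^ 2 / (2 * t)) = E2
    generalize B / s + C / (t - s) = E3
    field_simp
  rw [hL, ← hcv, himg, Measure.restrict_univ]
  simp only [g]
  have hg : ∀ y : ℝ, (Real.pi * t)⁻¹ * (Real.exp (-(B + C) ^ 2 / (2 * t)) *
      Real.exp (-y ^ 2 / (2 * t))) = (2 * pk t (B + C)) * gaussianPDFReal 0 t.toNNReal y := by
    intro y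
    unfold pk gaussianPDFReal
    rw [Real.coe_toNNReal _ ht.le, sub_zero]
    have h5 : √(2 * Real.pi * t) ^ 2 = 2 * Real.pi * t := Real.sq_sqrt (by positivity)
    have h6 : (√(2 * Real.pi * t))⁻¹ * (√(2 * Real.pi * t))⁻¹ = (2 * Real.pi * t)⁻¹ := by
      rw [← mul_inv, ← sq, h5]
    have h7 : (Real.pi * t)⁻¹ = 2 * (2 * Real.pi * t)⁻¹ := by
      have := Real.pi_pos
      field_simp
    rw [h7, ← h6]
    ring
  simp_rw [hg]
  have hc : 0 ≤ 2 * pk t (B + C) := mul_nonneg zero_le_two (pk_nonneg _ _)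
  simp_rw [ENNReal.ofReal_mul hc]
  rw [lintegral_const_mul _ (by fun_prop), lintegral_gaussianPDFReal_eq_one, mul_one]
  simpa using ht

lemma hasDerivAt_pk {r z : ℝ} (c : ℝ) :
    HasDerivAt (fun h => pk r (c + h)) (-((c + z) / r) * pk r (c + z)) z := by
  unfold pk
  have h1 : HasDerivAt (fun h : ℝ => -(c + h) ^ 2 / (2 * r)) (-((c + z) / r)) z := by
    have := ((((hasDerivAt_id z).const_add c).pow 2).neg).div_const (2 * r)
    refine this.congr_deriv ?_
    simp only [id]
    by_cases hr : r = 0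
    · simp [hr]
    · field_simp; simp; ring
  refine (h1.exp.const_mul _).congr_deriv ?_
  ring

lemma tendsto_pk {r : ℝ} (hr : 0 < r) (c : ℝ) :
    Tendsto (fun h => pk r (c + h)) atTop (nhds 0) := by
  unfold pk
  have h1 : Tendsto (fun h : ℝ => -(c + h) ^ 2 / (2 * r)) atTop atBot := by
    apply Tendsto.atBot_div_const (by positivity)
    apply tendsto_neg_atTop_atBot.comp
    exact (tendsto_pow_atTop two_ne_zero).comp (tendsto_atTop_add_const_left _ c tendsto_id)
  simpa using (Real.tendsto_exp_atBot.comp h1).const_mul (√(2 * Real.pi * r))⁻¹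

lemma pk_prod_eq {t s b c : ℝ} (hs : 0 < s) (hst : s < t) (hb : 0 ≤ b) (hc : 0 ≤ c) :
    qk s b * qk (t - s) c = ∫⁻ h in Ioi 0,
      ENNReal.ofReal (((b + h) / s + (c + h) / (t - s)) * (pk s (b + h) * pk (t - s) (c + h))) := by
  have h1 : 0 < t - s := by linarith
  let F : ℝ → ℝ := fun h => pk s (b + h) * pk (t - s) (c + h)
  let F' : ℝ → ℝ := fun h =>
    ((b + h) / s + (c + h) / (t - s)) * (pk s (b + h) * pk (t - s) (c + h))
  have hd : ∀ h ∈ Ici (0 : ℝ), HasDerivAt (fun h => - F h) (F' h) h := by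
    intro h _
    refine ((hasDerivAt_pk (r := s) b).mul (hasDerivAt_pk (r := t - s) c)).neg.congr_deriv ?_
    simp only [F']; ring
  have hpos : ∀ h ∈ Ioi (0 : ℝ), 0 ≤ F' h := by
    intro h (hh : 0 < h)
    have := pk_nonneg s (b + h)
    have := pk_nonneg (t - s) (c + h)
    simp only [F']; positivity
  have hlim : Tendsto (fun h => - F h) atTop (nhds 0) := by
    simpa using ((tendsto_pk hs b).mul (tendsto_pk h1 c)).neg
  have hI := integral_Ioi_of_hasDerivAt_of_nonneg' hd hpos hlim
  have hInt := integrableOn_Ioi_deriv_of_nonneg' hd hpos hlim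
  have := ofReal_integral_eq_lintegral_ofReal hInt
    ((ae_restrict_iff' measurableSet_Ioi).2 (ae_of_all _ hpos))
  rw [← this, hI]
  simp only [F, add_zero, zero_sub, neg_neg, qk]
  rw [← ENNReal.ofReal_mul (pk_nonneg _ _)]

lemma key_conv {t b c : ℝ} (ht : 0 < t) (hb : 0 ≤ b) (hc : 0 ≤ c) :
    ∫⁻ s in Ioo 0 t, qk s b * qk (t - s) c = ∫⁻ z in Ioi 0, qk t (b + c + z) := by
  have e1 : ∫⁻ s in Ioo 0 t, qk s b * qk (t - s) c = ∫⁻ s in Ioo 0 t, ∫⁻ h in Ioi 0,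
      ENNReal.ofReal (((b + h) / s + (c + h) / (t - s)) *
        (pk s (b + h) * pk (t - s) (c + h))) :=
    setLIntegral_congr_fun measurableSet_Ioo fun s hs => pk_prod_eq hs.1 hs.2 hb hc
  rw [e1, lintegral_lintegral_swap]
  · have e2 : ∫⁻ h in Ioi 0, ∫⁻ s in Ioo 0 t, ENNReal.ofReal (((b + h) / s + (c + h) / (t - s)) *
        (pk s (b + h) * pk (t - s) (c + h))) =
        ∫⁻ h in Ioi 0, ENNReal.ofReal |2| * qk t (b + c + 2 * h) := by
      refine setLIntegral_congr_fun measurableSet_Ioi fun h (hh : 0 < h) => ?_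
      rw [key_inner ht (by linarith) (by linarith), ENNReal.ofReal_mul zero_le_two]
      simp only [qk, abs_two]
      congr 3; ring
    rw [e2]
    have hcv := lintegral_image_eq_lintegral_abs_deriv_mul (measurableSet_Ioi (a := (0:ℝ)))
      (f := fun h : ℝ => 2 * h) (f' := fun _ => 2)
      (fun h _ => ((hasDerivAt_id h).const_mul 2).hasDerivWithinAt.congr_deriv (by simp))
      (fun x _ y _ h => by simpa using h) (fun z => qk t (b + c + z))
    rw [← hcv]
    congr 2
    ext z
    constructor
    · rintro ⟨h, hh, rfl⟩
      have : 0 < h := hh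
      show 0 < 2 * h
      linarith
    · intro (hz : 0 < z)
      exact ⟨z / 2, by show 0 < z / 2; linarith, by ring⟩
  · apply Measurable.aemeasurable
    apply Measurable.ennreal_ofReal
    unfold pk
    fun_prop

/-- `k`-th moment over `k!` of the target. -/
noncomputable def Gk (k : ℕ) (t b : ℝ) : ℝ≥0∞ :=
  ∫⁻ y in Ioi 0, ENNReal.ofReal (y ^ k / k.factorial) * (2 * qk t (y + b))

lemma lintegral_pow_fact (k : ℕ) {x : ℝ} (hx : 0 < x) :
    ∫⁻ y in Ioo 0 x, ENNReal.ofReal (y ^ k / k.factorial) =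
      ENNReal.ofReal (x ^ (k + 1) / (k + 1).factorial) := by
  rw [← ofReal_integral_eq_lintegral_ofReal]
  · congr 1
    rw [← integral_Ioc_eq_integral_Ioo, ← intervalIntegral.integral_of_le hx.le]
    rw [intervalIntegral.integral_div, integral_pow, Nat.factorial_succ]
    push_cast
    field_simp
    simp
  · have : Continuous (fun y : ℝ => y ^ k / k.factorial) := by fun_prop
    exact (this.integrableOn_Icc (a := 0) (b := x)).mono_set Ioo_subset_Icc_self
  · refine (ae_restrict_iff' measurableSet_Ioo).2 (ae_of_all _ fun y hy => ?_)
    have := hy.1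
    simp only [Pi.zero_apply]
    positivity

lemma Gk_rec (k : ℕ) {t b : ℝ} (ht : 0 < t) (hb : 0 ≤ b) :
    ∫⁻ s in Ioo 0 t, qk s b * Gk k (t - s) 0 = Gk (k + 1) t b := by
  have mq : Measurable fun p : ℝ × ℝ => qk p.1 p.2 := measurable_qk
  have e1 : ∫⁻ s in Ioo 0 t, qk s b * Gk k (t - s) 0 =
      ∫⁻ s in Ioo 0 t, ∫⁻ y in Ioi 0,
        (ENNReal.ofReal (y ^ k / k.factorial) * 2) * (qk s b * qk (t - s) y) := by
    refine lintegral_congr fun s => ?_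
    unfold Gk
    rw [← lintegral_const_mul]
    · refine lintegral_congr fun y => ?_
      rw [add_zero]; ring
    · exact Measurable.mul (by fun_prop)
        ((mq.comp (f := fun y : ℝ => (t - s, y + 0)) (by fun_prop)).const_mul _)
  have e2 : ∫⁻ s in Ioo 0 t, ∫⁻ y in Ioi 0,
        (ENNReal.ofReal (y ^ k / k.factorial) * 2) * (qk s b * qk (t - s) y) =
      ∫⁻ y in Ioi 0, ∫⁻ x in Ioi 0, (Ioo 0 x).indicator
        (fun y => (ENNReal.ofReal (y ^ k / k.factorial))) y * (2 * qk t (x + b)) := by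
    rw [lintegral_lintegral_swap]
    · refine setLIntegral_congr_fun measurableSet_Ioi fun y (hy : 0 < y) => ?_
      rw [lintegral_const_mul]
      · rw [key_conv ht hb hy.le]
        rw [← lintegral_indicator measurableSet_Ioi, ← lintegral_indicator measurableSet_Ioi]
        rw [← lintegral_const_mul]
        · rw [← lintegral_sub_right_eq_self _ y]
          refine lintegral_congr fun x => ?_
          simp only [indicator_apply, mem_Ioi, mem_Ioo, sub_pos]
          by_cases hx : y < x
          · have hx0 : 0 < x := hy.trans hx
            simp only [hx, hx0, hy, if_true, and_self]
            rw [show b + y + (x - y) = x + b by ring]; ring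
          · simp [hx]
        · exact (mq.comp (f := fun z : ℝ => (t, b + y + z)) (by fun_prop)).indicator
            measurableSet_Ioi
      · exact (mq.comp (f := fun s : ℝ => (s, b)) (by fun_prop)).mul
          (mq.comp (f := fun s : ℝ => (t - s, y)) (by fun_prop))
    · apply Measurable.aemeasurable
      simp only [Function.uncurry_def]
      exact Measurable.mul (by fun_prop)
        ((mq.comp (f := fun p : ℝ × ℝ => (p.1, b)) (by fun_prop)).mul
          (mq.comp (f := fun p : ℝ × ℝ => (t - p.1, p.2)) (by fun_prop)))
  rw [e1, e2, lintegral_lintegral_swap]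
  · unfold Gk
    refine setLIntegral_congr_fun measurableSet_Ioi fun x (hx : 0 < x) => ?_
    rw [lintegral_mul_const]
    · congr 1
      rw [lintegral_indicator measurableSet_Ioo, Measure.restrict_restrict measurableSet_Ioo,
        inter_eq_left.2 Ioo_subset_Ioi_self, lintegral_pow_fact k hx]
    · exact Measurable.indicator (by fun_prop) measurableSet_Ioo
  · apply Measurable.aemeasurable
    simp only [Function.uncurry_def]
    refine Measurable.mul ?_
      ((mq.comp (f := fun p : ℝ × ℝ => (t, p.2 + b)) (by fun_prop)).const_mul _)
    have : (fun a : ℝ × ℝ => (Ioo 0 a.2).indicator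
        (fun y => ENNReal.ofReal (y ^ k / k.factorial)) a.1) =
        {a : ℝ × ℝ | 0 < a.1 ∧ a.1 < a.2}.indicator
          (fun a => ENNReal.ofReal (a.1 ^ k / k.factorial)) := by
      ext a; simp [indicator_apply]
    rw [this]
    refine Measurable.indicator (by fun_prop) ?_
    exact (measurableSet_lt measurable_const measurable_fst).inter
      (measurableSet_lt measurable_fst measurable_snd)

lemma gaussianPDF_eq_qk {t : ℝ} (ht : 0 < t) (m x : ℝ) :
    gaussianPDF m t.toNNReal x = qk t (x - m) := by
  unfold gaussianPDF gaussianPDFReal qk pk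
  rw [Real.coe_toNNReal _ ht.le]

lemma lintegral_gaussian {t : ℝ} (ht : 0 < t) {φ : ℝ → ℝ≥0∞} (hφ : Measurable φ) :
    ∫⁻ x, φ x ∂gaussianReal 0 t.toNNReal = ∫⁻ x, qk t x * φ x := by
  rw [gaussianReal_of_var_ne_zero _ (by simpa using ht),
    lintegral_withDensity_eq_lintegral_mul _ (by fun_prop) hφ]
  refine lintegral_congr fun x => ?_
  simp only [Pi.mul_apply]
  rw [gaussianPDF_eq_qk ht, sub_zero]

lemma qk_neg (t x : ℝ) : qk t (-x) = qk t x := by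
  unfold qk pk; rw [neg_sq]

lemma lintegral_gauss_abs {t : ℝ} (ht : 0 < t) {φ : ℝ → ℝ≥0∞} (hφ : Measurable φ) :
    ∫⁻ x, φ |x| ∂gaussianReal 0 t.toNNReal = ∫⁻ x in Ioi 0, φ x * (2 * qk t x) := by
  have mq : Measurable (fun x => qk t x) :=
    measurable_qk.comp (f := fun x : ℝ => (t, x)) (by fun_prop)
  have mabs : Measurable (fun x : ℝ => |x|) := measurable_norm
  rw [lintegral_gaussian (φ := fun x => φ |x|) ht (hφ.comp mabs), ← lintegral_add_compl _ (measurableSet_Ioi (a := (0:ℝ)))]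
  have e1 : ∫⁻ x in (Ioi (0:ℝ))ᶜ, qk t x * φ |x| = ∫⁻ x in Ioi 0, qk t x * φ |x| := by
    rw [compl_Ioi, ← setLIntegral_congr Iio_ae_eq_Iic,
      ← lintegral_indicator measurableSet_Iio, ← lintegral_indicator measurableSet_Ioi,
      ← lintegral_neg_eq_self]
    refine lintegral_congr fun x => ?_
    simp only [indicator_apply, mem_Iio, mem_Ioi, neg_lt_zero, abs_neg, qk_neg]
  rw [e1, ← two_mul, ← lintegral_const_mul (f := fun x => qk t x * φ |x|) _ (mq.mul (hφ.comp mabs))]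
  refine setLIntegral_congr_fun measurableSet_Ioi fun x (hx : 0 < x) => ?_
  simp only [abs_of_pos hx]
  ring

/-- Law of `(|N_t| - b)⁺`. -/
noncomputable def targetLaw (t b : ℝ) : Measure ℝ :=
  (gaussianReal 0 t.toNNReal).map (fun x => max (|x| - b) 0)

lemma measurable_max_abs (b : ℝ) : Measurable (fun x : ℝ => max (|x| - b) 0) := by
  have mabs : Measurable (fun x : ℝ => |x|) := measurable_norm
  exact (mabs.sub_const b).max measurable_const

instance (t b : ℝ) : IsProbabilityMeasure (targetLaw t b) :=
  Measure.isProbabilityMeasure_map (measurable_max_abs b).aemeasurable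

lemma lintegral_targetLaw {t b : ℝ} (ht : 0 < t) (hb : 0 ≤ b) {φ : ℝ → ℝ≥0∞} (hφ : Measurable φ)
    (h0 : b = 0 ∨ φ 0 = 0) :
    ∫⁻ y, φ y ∂targetLaw t b = ∫⁻ y in Ioi 0, φ y * (2 * qk t (y + b)) := by
  unfold targetLaw
  rw [lintegral_map hφ (measurable_max_abs b)]
  rw [lintegral_gauss_abs (φ := fun x => φ (max (x - b) 0)) ht
    (hφ.comp ((measurable_id.sub_const b).max measurable_const))]
  rw [← lintegral_indicator measurableSet_Ioi, ← lintegral_indicator measurableSet_Ioi,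
    ← lintegral_add_right_eq_self _ b]
  refine lintegral_congr fun y => ?_
  simp only [indicator_apply, mem_Ioi, add_sub_cancel_right]
  by_cases hy : 0 < y
  · have : 0 < y + b := by linarith
    simp [hy, this, max_eq_left hy.le]
  · simp only [hy, if_false, max_eq_right (not_lt.1 hy)]
    rcases h0 with h0 | h0
    · simp [h0, hy]
    · simp [h0]

lemma moment_targetLaw {t b : ℝ} (ht : 0 < t) (hb : 0 ≤ b) {k : ℕ} (hk : k ≠ 0) :
    ∫⁻ y, ENNReal.ofReal (y ^ k / k.factorial) ∂targetLaw t b = Gk k t b := by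
  rw [lintegral_targetLaw ht hb (by fun_prop) (Or.inr (by simp [hk]))]
  rfl

lemma moment_targetLaw_zero {t : ℝ} (ht : 0 < t) (k : ℕ) :
    ∫⁻ y, ENNReal.ofReal (y ^ k / k.factorial) ∂targetLaw t 0 = Gk k t 0 := by
  rw [lintegral_targetLaw ht le_rfl (by fun_prop) (Or.inl rfl)]
  rfl

lemma Gk_zero_zero {t : ℝ} (ht : 0 < t) : Gk 0 t 0 = 1 := by
  rw [← moment_targetLaw_zero ht]; simp

lemma pk_anti {t x y : ℝ} (ht : 0 ≤ t) (hx : 0 ≤ x) (hxy : x ≤ y) : pk t y ≤ pk t x := by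
  unfold pk
  gcongr

lemma qk_anti {t x y : ℝ} (ht : 0 ≤ t) (hx : 0 ≤ x) (hxy : x ≤ y) : qk t y ≤ qk t x :=
  ENNReal.ofReal_le_ofReal (pk_anti ht hx hxy)

lemma Gk_anti (k : ℕ) {t x y : ℝ} (ht : 0 ≤ t) (hx : 0 ≤ x) (hxy : x ≤ y) :
    Gk k t y ≤ Gk k t x := by
  unfold Gk
  refine setLIntegral_mono' measurableSet_Ioi fun z (hz : 0 < z) => ?_
  gcongr
  exact qk_anti ht (by linarith) (by linarith)

lemma tsum_Gk_ne_top {t : ℝ} (ht : 0 < t) {r : ℝ} (hr : 0 ≤ r) :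
    ∑' k, ENNReal.ofReal (r ^ k) * Gk k t 0 ≠ ∞ := by
  have e1 : ∀ k : ℕ, ENNReal.ofReal (r ^ k) * Gk k t 0 =
      ∫⁻ x, ENNReal.ofReal ((r * |x|) ^ k / k.factorial) ∂gaussianReal 0 t.toNNReal := by
    intro k
    rw [← moment_targetLaw_zero ht, ← lintegral_const_mul _ (by fun_prop)]
    unfold targetLaw
    rw [lintegral_map (by fun_prop) (measurable_max_abs 0)]
    refine lintegral_congr fun x => ?_
    rw [← ENNReal.ofReal_mul (by positivity), sub_zero, max_eq_left (abs_nonneg x)]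
    congr 1; ring
  simp_rw [e1]
  rw [← lintegral_tsum]
  · have e2 : ∀ x : ℝ, ∑' k : ℕ, ENNReal.ofReal ((r * |x|) ^ k / k.factorial) =
        ENNReal.ofReal (Real.exp (r * |x|)) := by
      intro x
      have := NormedSpace.expSeries_div_hasSum_exp (r * |x|)
      rw [← Real.exp_eq_exp_ℝ] at this
      rw [← this.tsum_eq, ENNReal.ofReal_tsum_of_nonneg _ this.summable]
      intro k; positivity
    simp_rw [e2]
    have hi : Integrable (fun x => Real.exp (r * x) + Real.exp (-r * x))
        (gaussianReal 0 t.toNNReal) :=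
      (integrable_exp_mul_gaussianReal r).add (integrable_exp_mul_gaussianReal (-r))
    refine ne_top_of_le_ne_top hi.lintegral_lt_top.ne (lintegral_mono fun x => ?_)
    apply ENNReal.ofReal_le_ofReal
    rcases abs_cases x with ⟨h, _⟩ | ⟨h, _⟩ <;> rw [h]
    · linarith [Real.exp_pos (-r * x)]
    · rw [mul_neg, ← neg_mul]; linarith [Real.exp_pos (r * x)]
  · intro k
    have mabs : Measurable (fun x : ℝ => |x|) := measurable_norm
    exact (((mabs.const_mul r).pow_const k).div_const _).ennreal_ofReal.aemeasurable

lemma Gk_ne_top {t : ℝ} (ht : 0 < t) (k : ℕ) : Gk k t 0 ≠ ∞ := by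
  have := ENNReal.ne_top_of_tsum_ne_top (tsum_Gk_ne_top ht zero_le_one) k
  simpa using this

lemma tendsto_Gk (k : ℕ) {t b : ℝ} (ht : 0 < t) {u : ℕ → ℝ} (hu : ∀ n, 0 ≤ u n)
    (hub : Tendsto u atTop (nhds b)) :
    Tendsto (fun n => Gk k t (u n)) atTop (nhds (Gk k t b)) := by
  unfold Gk
  refine tendsto_lintegral_of_dominated_convergence
    (fun y => ENNReal.ofReal (y ^ k / k.factorial) * (2 * qk t (y + 0))) ?_ ?_ (Gk_ne_top ht k) ?_
  · intro n
    exact Measurable.mul (by fun_prop) ((measurable_qk.comp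
      (f := fun y : ℝ => (t, y + u n)) (by fun_prop)).const_mul _)
  · intro n
    refine (ae_restrict_iff' measurableSet_Ioi).2 (ae_of_all _ fun y (hy : 0 < y) => ?_)
    refine mul_le_mul_right (mul_le_mul_right ?_ _) _
    exact qk_anti ht.le (by linarith) (by linarith [hu n])
  · refine ae_of_all _ fun y => ?_
    refine ENNReal.Tendsto.const_mul (ENNReal.Tendsto.const_mul ?_ (Or.inr (by simp)))
      (Or.inr (by simp))
    have : Continuous (fun x => qk t (y + x)) := by
      unfold qk pk; exact ENNReal.continuous_ofReal.comp (by fun_prop)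
    exact (this.tendsto b).comp hub

/-- Moments of the additive functional `∫ f(W)` started from `x`. -/
noncomputable def uk (f : ℝ → ℝ≥0∞) : ℕ → ℝ → ℝ → ℝ≥0∞
  | 0, _, _ => 1
  | k + 1, t, x => ∫⁻ r in Ioo 0 t, ∫⁻ y, qk r (y - x) * (f y * uk f k (t - r) y)

lemma measurable_uk {f : ℝ → ℝ≥0∞} (hf : Measurable f) (k : ℕ) :
    Measurable (fun p : ℝ × ℝ => uk f k p.1 p.2) := by
  induction k with
  | zero => simp only [uk]; exact measurable_const
  | succ k ih =>
    simp only [uk]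
    have h1 : Measurable (fun q : (ℝ × ℝ) × ℝ =>
        ∫⁻ y, qk q.2 (y - q.1.2) * (f y * uk f k (q.1.1 - q.2) y)) := by
      apply Measurable.lintegral_prod_right' (f := fun p : ((ℝ × ℝ) × ℝ) × ℝ =>
        qk p.1.2 (p.2 - p.1.1.2) * (f p.2 * uk f k (p.1.1.1 - p.1.2) p.2))
      exact (measurable_qk.comp
        (f := fun p : ((ℝ × ℝ) × ℝ) × ℝ => (p.1.2, p.2 - p.1.1.2)) (by fun_prop)).mul
        ((hf.comp measurable_snd).mul (ih.comp
        (f := fun p : ((ℝ × ℝ) × ℝ) × ℝ => (p.1.1.1 - p.1.2, p.2)) (by fun_prop)))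
    have h2 : (fun p : ℝ × ℝ => ∫⁻ r in Ioo 0 p.1, ∫⁻ y, qk r (y - p.2) *
        (f y * uk f k (p.1 - r) y)) = fun p : ℝ × ℝ => ∫⁻ r,
        {q : (ℝ × ℝ) × ℝ | 0 < q.2 ∧ q.2 < q.1.1}.indicator (fun q : (ℝ × ℝ) × ℝ =>
        ∫⁻ y, qk q.2 (y - q.1.2) * (f y * uk f k (q.1.1 - q.2) y)) (p, r) := by
      ext p
      rw [← lintegral_indicator measurableSet_Ioo]
      rfl
    rw [h2]
    apply Measurable.lintegral_prod_right'
    apply h1.indicator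
    exact (measurableSet_lt measurable_const measurable_snd).inter
      (measurableSet_lt measurable_snd (by fun_prop))

lemma uk_le_of {f : ℝ → ℝ≥0∞} (hf : Measurable f) {a ε : ℝ}
    (hsupp : ∀ y, ε < |y - a| → f y = 0) (hintg : ∫⁻ y, f y = 1) (k : ℕ)
    (ih : ∀ t, 0 < t → ∀ x, uk f k t x ≤ Gk k t 0) {t : ℝ} (ht : 0 < t) (x : ℝ) :
    uk f (k + 1) t x ≤ Gk (k + 1) t (max (|x - a| - ε) 0) := by
  rw [← Gk_rec k ht (le_max_right _ _)]
  simp only [uk]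
  refine setLIntegral_mono' measurableSet_Ioo fun r hr => ?_
  calc ∫⁻ y, qk r (y - x) * (f y * uk f k (t - r) y)
      ≤ ∫⁻ y, (qk r (max (|x - a| - ε) 0) * Gk k (t - r) 0) * f y := by
        refine lintegral_mono fun y => ?_
        by_cases hy : ε < |y - a|
        · simp [hsupp y hy]
        · have h1 : qk r (y - x) ≤ qk r (max (|x - a| - ε) 0) := by
            have : qk r (y - x) = qk r |y - x| := by
              rcases abs_cases (y - x) with ⟨h, _⟩ | ⟨h, _⟩ <;> rw [h]
              rw [qk_neg]
            rw [this]
            refine qk_anti hr.1.le (le_max_right _ _) (max_le ?_ (abs_nonneg _))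
            have := abs_sub_le x y a
            rw [abs_sub_comm x y] at this
            linarith
          have h2 := ih (t - r) (by linarith [hr.2]) y
          calc qk r (y - x) * (f y * uk f k (t - r) y)
              ≤ qk r (max (|x - a| - ε) 0) * (f y * Gk k (t - r) 0) := by gcongr
            _ = _ := by ring
    _ = qk r (max (|x - a| - ε) 0) * Gk k (t - r) 0 := by
        rw [lintegral_const_mul _ hf, hintg, mul_one]

lemma uk_le {f : ℝ → ℝ≥0∞} (hf : Measurable f) {a ε : ℝ}
    (hsupp : ∀ y, ε < |y - a| → f y = 0) (hintg : ∫⁻ y, f y = 1) (k : ℕ) :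
    ∀ t, 0 < t → ∀ x, uk f k t x ≤ Gk k t 0 := by
  induction k with
  | zero => intro t ht x; rw [Gk_zero_zero ht]; simp [uk]
  | succ k ih =>
    intro t ht x
    exact (uk_le_of hf hsupp hintg k ih ht x).trans (Gk_anti _ ht.le le_rfl (le_max_right _ _))

/-- A continuous mollifier. -/
structure IsMoll (T : ℝ → ℝ) : Prop where
  cont : Continuous T
  nonneg : ∀ z, 0 ≤ T z
  supp : ∀ z, 1 < |z| → T z = 0
  int : ∫⁻ z, ENNReal.ofReal (T z) = 1

lemma exists_moll : ∃ T, IsMoll T := by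
  let φ : ContDiffBump (0 : ℝ) := ⟨1 / 2, 1, by norm_num, by norm_num⟩
  refine ⟨φ.normed volume, φ.continuous_normed, φ.nonneg_normed, ?_, ?_⟩
  · intro z hz
    by_contra h
    have : z ∈ Function.support (φ.normed volume) := h
    rw [φ.support_normed_eq] at this
    simp [φ] at this
    linarith
  · rw [← ofReal_integral_eq_lintegral_ofReal φ.integrable_normed (ae_of_all _ φ.nonneg_normed),
      φ.integral_normed]
    simp

/-- Rescaled mollifier. -/
noncomputable def fR (T : ℝ → ℝ) (a : ℝ) (n : ℕ) (y : ℝ) : ℝ := (n + 1) * T ((n + 1) * (y - a))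

lemma fR_cont {T : ℝ → ℝ} (hT : IsMoll T) (a : ℝ) (n : ℕ) : Continuous (fR T a n) := by
  have := hT.cont
  unfold fR; fun_prop

lemma fR_nonneg {T : ℝ → ℝ} (hT : IsMoll T) (a : ℝ) (n : ℕ) (y : ℝ) : 0 ≤ fR T a n y := by
  have := hT.nonneg ((n + 1) * (y - a))
  unfold fR; positivity

/-- Rescaled mollifier, extended nonnegative version. -/
noncomputable def fE (T : ℝ → ℝ) (a : ℝ) (n : ℕ) (y : ℝ) : ℝ≥0∞ := ENNReal.ofReal (fR T a n y)

lemma fE_meas {T : ℝ → ℝ} (hT : IsMoll T) (a : ℝ) (n : ℕ) : Measurable (fE T a n) :=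
  (fR_cont hT a n).measurable.ennreal_ofReal

lemma fE_change {T : ℝ → ℝ} (a : ℝ) (n : ℕ) (h : ℝ → ℝ≥0∞) :
    ∫⁻ y, fE T a n y * h y = ∫⁻ z, ENNReal.ofReal (T z) * h (a + z / (n + 1)) := by
  have hn : (0 : ℝ) < n + 1 := by positivity
  have hcv := lintegral_image_eq_lintegral_abs_deriv_mul (MeasurableSet.univ (α := ℝ))
      (f := fun z : ℝ => a + z / (n + 1)) (f' := fun _ => 1 / (n + 1))
      (fun z _ => (((hasDerivAt_id z).div_const _).const_add a).hasDerivWithinAt)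
      (fun x _ y _ h => by simpa [hn.ne', div_left_inj'] using h) (fun y => fE T a n y * h y)
  have himg : (fun z : ℝ => a + z / ((n : ℝ) + 1)) '' univ = univ := by
    refine eq_univ_of_forall fun y => ⟨(n + 1) * (y - a), mem_univ _, ?_⟩
    field_simp; ring
  rw [himg, Measure.restrict_univ] at hcv
  rw [hcv]
  refine lintegral_congr fun z => ?_
  unfold fE fR
  rw [← mul_assoc, ← ENNReal.ofReal_mul (abs_nonneg _), abs_of_pos (by positivity)]
  congr 2
  have : ((n : ℝ) + 1) * (a + z / (n + 1) - a) = z := by field_simp; ring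
  rw [this]
  field_simp

lemma fE_int {T : ℝ → ℝ} (hT : IsMoll T) (a : ℝ) (n : ℕ) : ∫⁻ y, fE T a n y = 1 := by
  have := fE_change (T := T) a n (fun _ => 1)
  simpa [hT.int] using this

lemma fE_supp {T : ℝ → ℝ} (hT : IsMoll T) (a : ℝ) (n : ℕ) (y : ℝ) (hy : 1 / ((n : ℝ) + 1) < |y - a|) :
    fE T a n y = 0 := by
  have hn : (0 : ℝ) < n + 1 := by positivity
  unfold fE fR
  rw [hT.supp]
  · simp
  · rw [abs_mul, abs_of_pos hn]
    rwa [div_lt_iff₀ hn, mul_comm] at hy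

lemma tendsto_shift (a z : ℝ) : Tendsto (fun n : ℕ => a + z / ((n : ℝ) + 1)) atTop (nhds a) := by
  have := (tendsto_one_div_add_atTop_nhds_zero_nat (𝕜 := ℝ)).const_mul z
  simpa [div_eq_mul_inv] using this.const_add a

lemma uk_liminf {T : ℝ → ℝ} (hT : IsMoll T) (a : ℝ) (k : ℕ) :
    ∀ t, 0 < t → ∀ (x : ℝ) (xs : ℕ → ℝ), Tendsto xs atTop (nhds x) → (k ≠ 0 ∨ x = a) →
    Gk k t |x - a| ≤ liminf (fun n => uk (fE T a n) k t (xs n)) atTop := by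
  induction k with
  | zero =>
    intro t ht x xs _ h
    have : x = a := by simpa using h
    simp [this, uk, Gk_zero_zero ht]
  | succ k ih =>
    intro t ht x xs hxs _
    rw [← Gk_rec k ht (abs_nonneg _)]
    have e : ∀ n, uk (fE T a n) (k + 1) t (xs n) = ∫⁻ r in Ioo 0 t, ∫⁻ z,
        ENNReal.ofReal (T z) * (qk r (a + z / (n + 1) - xs n) *
          uk (fE T a n) k (t - r) (a + z / (n + 1))) := by
      intro n
      simp only [uk]
      refine lintegral_congr fun r => ?_
      rw [← fE_change (T := T) a n
        (fun y => qk r (y - xs n) * uk (fE T a n) k (t - r) y)]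
      refine lintegral_congr fun y => ?_
      ring
    simp_rw [e]
    have mT : Measurable (fun z => ENNReal.ofReal (T z)) := hT.cont.measurable.ennreal_ofReal
    have m1 : ∀ n : ℕ, Measurable (fun p : ℝ × ℝ => ENNReal.ofReal (T p.2) *
        (qk p.1 (a + p.2 / (n + 1) - xs n) *
          uk (fE T a n) k (t - p.1) (a + p.2 / (n + 1)))) := fun n =>
      (mT.comp measurable_snd).mul ((measurable_qk.comp
        (f := fun p : ℝ × ℝ => (p.1, a + p.2 / (n + 1) - xs n)) (by fun_prop)).mul
        ((measurable_uk (fE_meas hT a n) k).comp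
        (f := fun p : ℝ × ℝ => (t - p.1, a + p.2 / (n + 1))) (by fun_prop)))
    refine le_trans ?_ (lintegral_liminf_le fun n => (m1 n).lintegral_prod_right')
    refine setLIntegral_mono' measurableSet_Ioo fun r hr => ?_
    refine le_trans ?_ (lintegral_liminf_le fun n => (m1 n).comp measurable_prodMk_left)
    have : qk r |x - a| * Gk k (t - r) 0 =
        ∫⁻ z, ENNReal.ofReal (T z) * (qk r |x - a| * Gk k (t - r) 0) := by
      rw [lintegral_mul_const _ mT, hT.int, one_mul]
    rw [this]
    refine lintegral_mono fun z => ?_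
    simp only
    rw [ENNReal.liminf_const_mul_of_ne_top ENNReal.ofReal_ne_top]
    refine mul_le_mul_right ?_ _
    refine le_trans ?_ ENNReal.le_liminf_mul
    refine mul_le_mul' ?_ ?_
    · have hc : Continuous (fun y => qk r y) := by
        unfold qk pk; exact ENNReal.continuous_ofReal.comp (by fun_prop)
      have := (hc.tendsto _).comp ((tendsto_shift a z).sub hxs)
      have h2 := this.liminf_eq
      simp only [Function.comp_def] at h2
      rw [h2]
      rcases abs_cases (x - a) with ⟨h, _⟩ | ⟨h, _⟩ <;> rw [h]
      · rw [← qk_neg, neg_sub]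
      · rw [neg_sub]
    · have := ih (t - r) (by linarith [hr.2]) a _ (tendsto_shift a z) (Or.inr rfl)
      simpa using this

lemma tendsto_uk {T : ℝ → ℝ} (hT : IsMoll T) (a : ℝ) (k : ℕ) (hk : k ≠ 0) {t : ℝ} (ht : 0 < t)
    (x : ℝ) : Tendsto (fun n => uk (fE T a n) k t x) atTop (nhds (Gk k t |x - a|)) := by
  obtain ⟨k, rfl⟩ := Nat.exists_eq_succ_of_ne_zero hk
  refine tendsto_of_le_liminf_of_limsup_le
    (uk_liminf hT a _ t ht x _ tendsto_const_nhds (Or.inl hk)) ?_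
  have h1 : ∀ n, uk (fE T a n) (k + 1) t x ≤
      Gk (k + 1) t (max (|x - a| - 1 / ((n : ℝ) + 1)) 0) := fun n =>
    uk_le_of (fE_meas hT a n) (fE_supp hT a n) (fE_int hT a n) k
      (uk_le (fE_meas hT a n) (fE_supp hT a n) (fE_int hT a n) k) ht x
  have h2 : Tendsto (fun n : ℕ => max (|x - a| - 1 / ((n : ℝ) + 1)) 0) atTop
      (nhds |x - a|) := by
    have := ((tendsto_one_div_add_atTop_nhds_zero_nat (𝕜 := ℝ)).const_sub |x - a|).max
      (tendsto_const_nhds (x := (0 : ℝ)))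
    simpa using this
  have h3 := tendsto_Gk (k + 1) ht (fun n => le_max_right _ _) h2
  rw [← h3.limsup_eq]
  exact limsup_le_limsup (Eventually.of_forall h1)

lemma IsBrownianMotion.pre {Ω : Type*} [MeasurableSpace Ω] {P : Measure Ω} {W : ℝ → Ω → ℝ}
    (hW : IsBrownianMotion P W) : IsPreBrownianReal (fun q : ℝ≥0 => W q) P := by
  refine HasIndepIncrements.isPreBrownianReal_of_hasLaw (fun q => ⟨(hW.meas q).aemeasurable, ?_⟩)
    (fun n t ht => ?_)
  · have := hW.incr_law 0 q le_rfl q.2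
    simpa [hW.2] using this
  · exact hW.indep_incr n (fun i => (t i : ℝ)) (fun i j h => by exact_mod_cast ht h) (t 0).2

/-- The past of the process. -/
@[reducible] def past {Ω : Type*} (W : ℝ → Ω → ℝ) (s : ℝ) : MeasurableSpace Ω :=
  ⨆ q : Icc (0 : ℝ) s, MeasurableSpace.comap (W q) inferInstance

lemma past_mono {Ω : Type*} (W : ℝ → Ω → ℝ) {s r : ℝ} (h : s ≤ r) : past W s ≤ past W r :=
  iSup_le fun q => le_iSup (fun q : Icc (0 : ℝ) r => MeasurableSpace.comap (W q) inferInstance)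
    ⟨q.1, q.2.1, q.2.2.trans h⟩

lemma past_le {Ω : Type*} [m : MeasurableSpace Ω] {W : ℝ → Ω → ℝ} (hm : ∀ t, Measurable (W t))
    (s : ℝ) : past W s ≤ m :=
  iSup_le fun q => (hm q).comap_le

lemma measurable_past {Ω : Type*} (W : ℝ → Ω → ℝ) {s : ℝ} (hs : 0 ≤ s) :
    Measurable[past W s] (W s) := by
  rw [measurable_iff_comap_le]
  exact le_iSup (fun q : Icc (0 : ℝ) s => MeasurableSpace.comap (W q) inferInstance)
    ⟨s, hs, le_rfl⟩

lemma indep_past {Ω : Type*} [MeasurableSpace Ω] {P : Measure Ω} {W : ℝ → Ω → ℝ}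
    (hpre : IsPreBrownianReal (fun q : ℝ≥0 => W q) P) {s r : ℝ} (hs : 0 ≤ s) (hr : s ≤ r) :
    Indep (past W s) (MeasurableSpace.comap (fun ω => W r ω - W s ω) inferInstance) P := by
  lift s to ℝ≥0 using hs
  have h := hpre.indepFun_shift s
  rw [IndepFun_iff_Indep] at h
  refine (indep_of_indep_of_le_left (indep_of_indep_of_le_right h.symm ?_) ?_)
  · rw [← measurable_iff_comap_le]
    have h1 : Measurable (fun x : ℝ≥0 → ℝ => x (r - s).toNNReal) := measurable_pi_apply _
    have h2 := h1.comp (comap_measurable (fun ω (q : ℝ≥0) =>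
      W ((s + q : ℝ≥0) : ℝ) ω - W (s : ℝ) ω))
    have e : (fun ω => W r ω - W s ω) = (fun x : ℝ≥0 → ℝ => x (r - s).toNNReal) ∘
        (fun ω (q : ℝ≥0) => W ((s + q : ℝ≥0) : ℝ) ω - W (s : ℝ) ω) := by
      ext ω
      have : ((s + (r - s).toNNReal : ℝ≥0) : ℝ) = r := by
        rw [NNReal.coe_add, Real.coe_toNNReal _ (by linarith)]; ring
      simp only [Function.comp_apply, this]
    rw [e]
    exact h2
  · refine iSup_le fun q => ?_
    rw [← measurable_iff_comap_le]
    have h1 : Measurable (fun x : (Set.Iic s) → ℝ => x ⟨⟨q.1, q.2.1⟩, q.2.2⟩) :=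
      measurable_pi_apply _
    exact h1.comp (comap_measurable (fun ω (q : Set.Iic s) => W (q.1 : ℝ) ω))

lemma markov_step {Ω : Type*} [MeasurableSpace Ω] {P : Measure Ω} {W : ℝ → Ω → ℝ}
    (hpre : IsPreBrownianReal (fun q : ℝ≥0 => W q) P) (hm : ∀ t, Measurable (W t))
    {s r : ℝ} (hs : 0 ≤ s) (hr : s < r) {Z : Ω → ℝ≥0∞} (hZ : Measurable[past W s] Z)
    {g : ℝ → ℝ≥0∞} (hg : Measurable g) :
    ∫⁻ ω, Z ω * g (W r ω) ∂P = ∫⁻ ω, Z ω * (∫⁻ y, qk (r - s) (y - W s ω) * g y) ∂P := by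
  have hprob : IsProbabilityMeasure P := hpre.isGaussianProcess.isProbabilityMeasure
  have hZm : Measurable Z := hZ.mono (past_le hm s) le_rfl
  have hD : Measurable (fun ω => W r ω - W s ω) := (hm r).sub (hm s)
  have hp : Measurable (fun ω => (Z ω, W s ω)) := hZm.prodMk (hm s)
  have hind : IndepFun (fun ω => (Z ω, W s ω)) (fun ω => W r ω - W s ω) P := by
    rw [IndepFun_iff_Indep]
    refine indep_of_indep_of_le_left (indep_past hpre hs hr.le) ?_
    rw [← measurable_iff_comap_le]
    exact hZ.prodMk (measurable_past W hs)
  have hlaw : Measure.map (fun ω => W r ω - W s ω) P = gaussianReal 0 (r - s).toNNReal := by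
    have := (hpre.hasLaw_sub ⟨r, hs.trans hr.le⟩ ⟨s, hs⟩).map_eq
    have e : (r - s).toNNReal = nndist (⟨r, hs.trans hr.le⟩ : ℝ≥0) ⟨s, hs⟩ := by
      ext
      rw [coe_nndist, Real.coe_toNNReal _ (by linarith)]
      exact (abs_of_nonneg (by linarith)).symm
    rw [e]
    exact this
  have hmap := (indepFun_iff_map_prod_eq_prod_map_map hp.aemeasurable hD.aemeasurable).1 hind
  let F : (ℝ≥0∞ × ℝ) × ℝ → ℝ≥0∞ := fun p => p.1.1 * g (p.1.2 + p.2)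
  have hF : Measurable F :=
    (measurable_fst.comp measurable_fst).mul (hg.comp (by fun_prop))
  calc ∫⁻ ω, Z ω * g (W r ω) ∂P
      = ∫⁻ ω, F ((Z ω, W s ω), W r ω - W s ω) ∂P := by
        refine lintegral_congr fun ω => ?_
        simp [F]
    _ = ∫⁻ q, F q ∂((P.map (fun ω => (Z ω, W s ω))).prod
          (P.map (fun ω => W r ω - W s ω))) := by
        rw [← hmap, lintegral_map hF (hp.prodMk hD)]
    _ = ∫⁻ ω, ∫⁻ d, F ((Z ω, W s ω), d) ∂(gaussianReal 0 (r - s).toNNReal) ∂P := by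
        rw [lintegral_prod _ hF.aemeasurable, hlaw,
          lintegral_map hF.lintegral_prod_right' hp]
    _ = _ := by
        refine lintegral_congr fun ω => ?_
        simp only [F]
        have hg' : Measurable fun d => g (W s ω + d) := hg.comp (by fun_prop)
        rw [lintegral_const_mul _ hg', lintegral_gaussian (by linarith) hg']
        congr 1
        rw [← lintegral_sub_right_eq_self _ (W s ω)]
        refine lintegral_congr fun y => ?_
        rw [add_sub_cancel]

/-- Iterated time integrals. -/
noncomputable def Ik (φ : ℝ → ℝ≥0∞) (t : ℝ) : ℕ → ℝ → ℝ≥0∞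
  | 0, _ => 1
  | k + 1, s => ∫⁻ r in Ioo s t, φ r * Ik φ t k r

lemma measurable_Ik {Ω : Type*} [MeasurableSpace Ω] {φ : Ω → ℝ → ℝ≥0∞}
    (hφ : Measurable (fun p : Ω × ℝ => φ p.1 p.2)) (t : ℝ) (k : ℕ) :
    Measurable (fun p : Ω × ℝ => Ik (φ p.1) t k p.2) := by
  induction k with
  | zero => simp only [Ik]; exact measurable_const
  | succ k ih =>
    simp only [Ik]
    have h2 : (fun p : Ω × ℝ => ∫⁻ r in Ioo p.2 t, φ p.1 r * Ik (φ p.1) t k r) =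
        fun p : Ω × ℝ => ∫⁻ r, {q : (Ω × ℝ) × ℝ | q.1.2 < q.2 ∧ q.2 < t}.indicator
        (fun q : (Ω × ℝ) × ℝ => φ q.1.1 q.2 * Ik (φ q.1.1) t k q.2) (p, r) := by
      ext p
      rw [← lintegral_indicator measurableSet_Ioo]
      rfl
    rw [h2]
    apply Measurable.lintegral_prod_right'
    refine Measurable.indicator ?_ ?_
    · exact (hφ.comp (f := fun q : (Ω × ℝ) × ℝ => (q.1.1, q.2)) (by fun_prop)).mul
        (ih.comp (f := fun q : (Ω × ℝ) × ℝ => (q.1.1, q.2)) (by fun_prop))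
    · exact (measurableSet_lt (by fun_prop) measurable_snd).inter
        (measurableSet_lt measurable_snd measurable_const)

lemma moment_markov {Ω : Type*} [MeasurableSpace Ω] {P : Measure Ω} {W : ℝ → Ω → ℝ}
    (hpre : IsPreBrownianReal (fun q : ℝ≥0 => W q) P) (hm : ∀ t, Measurable (W t))
    (hj : Measurable (fun p : Ω × ℝ => W p.2 p.1)) {f : ℝ → ℝ≥0∞} (hf : Measurable f)
    (t : ℝ) (k : ℕ) :
    ∀ s, 0 ≤ s → ∀ Z : Ω → ℝ≥0∞, Measurable[past W s] Z →
      ∫⁻ ω, Z ω * Ik (fun r => f (W r ω)) t k s ∂P = ∫⁻ ω, Z ω * uk f k (t - s) (W s ω) ∂P := by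
  have hprob : IsProbabilityMeasure P := hpre.isGaussianProcess.isProbabilityMeasure
  have hφ : Measurable (fun p : Ω × ℝ => f (W p.2 p.1)) := hf.comp hj
  induction k with
  | zero => intro s _ Z _; simp [Ik, uk]
  | succ k ih =>
    intro s hs Z hZ
    have hZm : Measurable Z := hZ.mono (past_le hm s) le_rfl
    have mI := measurable_Ik (φ := fun ω r => f (W r ω)) hφ t k
    have mu := measurable_uk hf k
    have hintg : Measurable (fun p : Ω × ℝ => f (W p.2 p.1) * Ik (fun r => f (W r p.1)) t k p.2) :=
      hφ.mul mI
    have hker : Measurable (fun p : Ω × ℝ =>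
        ∫⁻ y, qk (p.2 - s) (y - W s p.1) * (f y * uk f k (t - p.2) y)) := by
      apply Measurable.lintegral_prod_right' (f := fun p : (Ω × ℝ) × ℝ =>
        qk (p.1.2 - s) (p.2 - W s p.1.1) * (f p.2 * uk f k (t - p.1.2) p.2))
      have := hm s
      exact (measurable_qk.comp
        (f := fun p : (Ω × ℝ) × ℝ => (p.1.2 - s, p.2 - W s p.1.1)) (by fun_prop)).mul
        ((hf.comp measurable_snd).mul (mu.comp
        (f := fun p : (Ω × ℝ) × ℝ => (t - p.1.2, p.2)) (by fun_prop)))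
    calc ∫⁻ ω, Z ω * Ik (fun r => f (W r ω)) t (k + 1) s ∂P
        = ∫⁻ ω, (∫⁻ r in Ioo s t, Z ω * (f (W r ω) * Ik (fun r => f (W r ω)) t k r)) ∂P := by
          refine lintegral_congr fun ω => ?_
          simp only [Ik]
          rw [lintegral_const_mul]
          exact hintg.comp measurable_prodMk_left
      _ = ∫⁻ r in Ioo s t, ∫⁻ ω, Z ω * (f (W r ω) * Ik (fun r => f (W r ω)) t k r) ∂P := by
          apply lintegral_lintegral_swap
          exact ((hZm.comp measurable_fst).mul hintg).aemeasurable
      _ = ∫⁻ r in Ioo s t, ∫⁻ ω, (Z ω *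
            ∫⁻ y, qk (r - s) (y - W s ω) * (f y * uk f k (t - r) y)) ∂P := by
          refine setLIntegral_congr_fun measurableSet_Ioo fun r hr => ?_
          have hr0 : 0 ≤ r := hs.trans hr.1.le
          have hZ' : Measurable[past W r] (fun ω => Z ω * f (W r ω)) :=
            @Measurable.mul _ _ _ _ (past W r) Z (fun ω => f (W r ω)) _
              (hZ.mono (past_mono W hr.1.le) le_rfl) (hf.comp (measurable_past W hr0))
          have h1 := ih r hr0 _ hZ'
          simp only [mul_assoc] at h1
          rw [h1, ← markov_step hpre hm hs hr.1 hZ (g := fun y => f y * uk f k (t - r) y)]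
          exact hf.mul (mu.comp measurable_prodMk_left)
      _ = ∫⁻ ω, (∫⁻ r in Ioo s t, Z ω *
            ∫⁻ y, qk (r - s) (y - W s ω) * (f y * uk f k (t - r) y)) ∂P := by
          symm
          apply lintegral_lintegral_swap
          exact ((hZm.comp measurable_fst).mul hker).aemeasurable
      _ = ∫⁻ ω, Z ω * uk f (k + 1) (t - s) (W s ω) ∂P := by
          refine lintegral_congr fun ω => ?_
          have hk2 : Measurable (fun r =>
              ∫⁻ y, qk (r - s) (y - W s ω) * (f y * uk f k (t - r) y)) :=
            hker.comp (measurable_prodMk_left (x := ω))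
          rw [lintegral_const_mul _ hk2]
          congr 1
          simp only [uk]
          rw [← lintegral_indicator measurableSet_Ioo, ← lintegral_indicator measurableSet_Ioo,
            ← lintegral_add_right_eq_self _ s]
          refine lintegral_congr fun r => ?_
          simp only [indicator_apply, mem_Ioo, add_sub_cancel_right, lt_add_iff_pos_left,
            lt_sub_iff_add_lt]
          rw [show t - (r + s) = t - s - r by ring]

lemma Ik_eq {φ : ℝ → ℝ} (hφ : Continuous φ) (h0 : ∀ r, 0 ≤ φ r) (t : ℝ) (k : ℕ) :
    ∀ s, s ≤ t → Ik (fun r => ENNReal.ofReal (φ r)) t k s =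
      ENNReal.ofReal ((∫ r in s..t, φ r) ^ k / k.factorial) := by
  induction k with
  | zero => intro s _; simp [Ik]
  | succ k ih =>
    intro s hs
    simp only [Ik]
    have hnn : ∀ r ≤ t, 0 ≤ ∫ u in r..t, φ u := fun r hr =>
      intervalIntegral.integral_nonneg hr (fun u _ => h0 u)
    have hder : ∀ r, HasDerivAt (fun r => ∫ u in r..t, φ u) (-φ r) r := fun r =>
      intervalIntegral.integral_hasDerivAt_left (hφ.intervalIntegrable _ _)
        hφ.aestronglyMeasurable.stronglyMeasurableAtFilter hφ.continuousAt
    have hcont : Continuous (fun r => ∫ u in r..t, φ u) :=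
      continuous_iff_continuousAt.2 fun r => (hder r).continuousAt
    have e1 : ∫⁻ r in Ioo s t, ENNReal.ofReal (φ r) * Ik (fun r => ENNReal.ofReal (φ r)) t k r =
        ∫⁻ r in Ioo s t, ENNReal.ofReal (φ r * ((∫ u in r..t, φ u) ^ k / k.factorial)) := by
      refine setLIntegral_congr_fun measurableSet_Ioo fun r hr => ?_
      rw [ih r hr.2.le, ENNReal.ofReal_mul (h0 r)]
    have hc : Continuous (fun r => φ r * ((∫ u in r..t, φ u) ^ k / k.factorial)) := by fun_prop
    rw [e1, ← ofReal_integral_eq_lintegral_ofReal]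
    · congr 1
      rw [← integral_Ioc_eq_integral_Ioo, ← intervalIntegral.integral_of_le hs]
      rw [intervalIntegral.integral_eq_sub_of_hasDerivAt
        (f := fun r => -((∫ u in r..t, φ u) ^ (k + 1) / (k + 1).factorial))]
      · simp
      · intro r _
        refine (((hder r).pow (k + 1)).div_const _).neg.congr_deriv ?_
        rw [Nat.factorial_succ]
        push_cast
        field_simp
      · exact hc.intervalIntegrable _ _
    · exact (hc.integrableOn_Icc (a := s) (b := t)).mono_set Ioo_subset_Icc_self
    · refine (ae_restrict_iff' measurableSet_Ioo).2 (ae_of_all _ fun r hr => ?_)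
      have := h0 r
      have := hnn r hr.2.le
      simp only [Pi.zero_apply]
      positivity

lemma charFun_series {Ω : Type*} [MeasurableSpace Ω] {P : Measure Ω} [IsProbabilityMeasure P]
    {X : Ω → ℝ} (hX : Measurable X) (h0 : ∀ ω, 0 ≤ X ω) {m : ℕ → ℝ≥0∞}
    (hm : ∀ k, ∫⁻ ω, ENNReal.ofReal (X ω ^ k / k.factorial) ∂P = m k) (hfin : ∀ k, m k ≠ ∞)
    (ξ : ℝ) (hs : ∑' k, ENNReal.ofReal (|ξ| ^ k) * m k ≠ ∞) :
    charFun (P.map X) ξ = ∑' k, ((ξ : ℂ) * Complex.I) ^ k * ((m k).toReal : ℂ) := by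
  have hnn : ∀ k ω, 0 ≤ X ω ^ k / k.factorial := fun k ω => by have := h0 ω; positivity
  have hmk : ∀ k : ℕ, Measurable fun ω => X ω ^ k / k.factorial := fun k => by fun_prop
  have hintg : ∀ k : ℕ, Integrable (fun ω => X ω ^ k / k.factorial) P := fun k => by
    rw [← lintegral_ofReal_ne_top_iff_integrable (hmk k).aestronglyMeasurable
      (ae_of_all _ (hnn k)), hm]
    exact hfin k
  have hval : ∀ k : ℕ, ∫ ω, X ω ^ k / k.factorial ∂P = (m k).toReal := fun k => by
    rw [integral_eq_lintegral_of_nonneg_ae (ae_of_all _ (hnn k)) (hmk k).aestronglyMeasurable, hm]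
  have key := hasSum_integral_of_summable_integral_norm (μ := P)
    (F := fun (k : ℕ) ω => ((ξ : ℂ) * Complex.I) ^ k * ((X ω ^ k / k.factorial : ℝ) : ℂ))
    (fun k => (hintg k).ofReal.const_mul _) ?_
  · rw [charFun_apply_real, integral_map hX.aemeasurable (by fun_prop)]
    have e1 : ∀ k : ℕ, ∫ ω, ((ξ : ℂ) * Complex.I) ^ k * ((X ω ^ k / k.factorial : ℝ) : ℂ) ∂P =
        ((ξ : ℂ) * Complex.I) ^ k * ((m k).toReal : ℂ) := fun k => by
      rw [integral_const_mul, ← hval, integral_complex_ofReal]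
    simp only [e1] at key
    rw [key.tsum_eq]
    refine integral_congr_ae (ae_of_all _ fun ω => ?_)
    simp only
    rw [Complex.exp_eq_exp_ℂ, NormedSpace.exp_eq_tsum_div]
    refine tsum_congr fun k => ?_
    push_cast
    rw [mul_right_comm, mul_pow]
    ring
  · have : ∀ k : ℕ, ∫ ω, ‖((ξ : ℂ) * Complex.I) ^ k * ((X ω ^ k / k.factorial : ℝ) : ℂ)‖ ∂P =
        (ENNReal.ofReal (|ξ| ^ k) * m k).toReal := fun k => by
      rw [ENNReal.toReal_mul, ENNReal.toReal_ofReal (by positivity), ← hval,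
        ← integral_const_mul]
      refine integral_congr_ae (ae_of_all _ fun ω => ?_)
      simp only [norm_mul, norm_pow, Complex.norm_real, Complex.norm_I, mul_one]
      rw [Real.norm_of_nonneg (hnn k ω), Real.norm_eq_abs]
    simp only [this]
    exact ENNReal.summable_toReal hs

lemma occupation_tendsto {T : ℝ → ℝ} (hT : IsMoll T) (a t : ℝ) {w : ℝ → ℝ} (hw : Continuous w)
    {l : ℝ → ℝ} (hl : Continuous l) (hl0 : ∀ x, 0 ≤ l x) (ht : 0 < t)
    (hocc : ∀ B : Set ℝ, MeasurableSet B →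
      ∫⁻ s in Icc (0 : ℝ) t, B.indicator (fun _ => (1 : ℝ≥0∞)) (w s) =
      ∫⁻ x in B, ENNReal.ofReal (l x)) :
    Tendsto (fun n => ∫ s in (0:ℝ)..t, fR T a n (w s)) atTop (nhds (l a)) := by
  have hmeas : (volume.restrict (Icc 0 t)).map w = volume.withDensity (fun x => ENNReal.ofReal (l x)) := by
    ext B hB
    rw [Measure.map_apply hw.measurable hB, withDensity_apply _ hB, ← hocc B hB]
    have : (fun s => B.indicator (fun _ => (1 : ℝ≥0∞)) (w s)) =
      (w ⁻¹' B).indicator (fun _ => (1 : ℝ≥0∞)) := by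
      ext s; by_cases h : w s ∈ B <;> simp [h]
    rw [this, lintegral_indicator (hw.measurable hB)]
    simp
  have hlm : Measurable fun x => ENNReal.ofReal (l x) := hl.measurable.ennreal_ofReal
  have hTm : Measurable fun z => ENNReal.ofReal (T z) := hT.cont.measurable.ennreal_ofReal
  have e1 : ∀ n, ENNReal.ofReal (∫ s in (0:ℝ)..t, fR T a n (w s)) =
      ∫⁻ z, ENNReal.ofReal (T z) * ENNReal.ofReal (l (a + z / (n + 1))) := fun n => by
    have hc : Continuous fun s => fR T a n (w s) := (fR_cont hT a n).comp hw
    rw [intervalIntegral.integral_of_le ht.le, ← integral_Icc_eq_integral_Ioc,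
      ofReal_integral_eq_lintegral_ofReal hc.integrableOn_Icc
        (ae_of_all _ fun s => fR_nonneg hT a n _)]
    rw [← fE_change a n (fun x => ENNReal.ofReal (l x))]
    have h3 := lintegral_map (μ := volume.restrict (Icc 0 t)) (fE_meas hT a n) hw.measurable
    rw [hmeas, lintegral_withDensity_eq_lintegral_mul _ hlm (fE_meas hT a n)] at h3
    simp only [Pi.mul_apply, mul_comm (ENNReal.ofReal (l _))] at h3
    rw [h3]
    rfl
  obtain ⟨C, hC⟩ := (isCompact_Icc (a := a - 1) (b := a + 1)).exists_bound_of_continuousOn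
    hl.continuousOn
  have h2 : Tendsto (fun n : ℕ => ∫⁻ z, ENNReal.ofReal (T z) * ENNReal.ofReal (l (a + z / (n + 1))))
      atTop (nhds (∫⁻ z, ENNReal.ofReal (T z) * ENNReal.ofReal (l a))) := by
    refine tendsto_lintegral_of_dominated_convergence
      (fun z => ENNReal.ofReal (T z) * ENNReal.ofReal C) (fun n => ?_) (fun n => ?_) ?_ ?_
    · exact hTm.mul (hlm.comp (by fun_prop))
    · refine ae_of_all _ fun z => ?_
      simp only
      by_cases hz : 1 < |z|
      · simp [hT.supp z hz]
      · gcongr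
        refine (le_abs_self _).trans (hC _ ?_)
        push Not at hz
        have hn : (0:ℝ) ≤ n := n.cast_nonneg
        have : |z / (n + 1)| ≤ 1 := by
          rw [abs_div, abs_of_pos (by linarith : (0:ℝ) < n + 1), div_le_one (by linarith)]
          linarith
        rw [abs_le] at this
        exact ⟨by linarith, by linarith⟩
    · rw [lintegral_mul_const _ hTm, hT.int]
      simp
    · refine ae_of_all _ fun z => ?_
      refine ENNReal.Tendsto.const_mul ?_ (Or.inr ENNReal.ofReal_ne_top)
      exact (ENNReal.continuous_ofReal.tendsto _).comp ((hl.tendsto a).comp (tendsto_shift a z))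
  rw [lintegral_mul_const _ hTm, hT.int, one_mul] at h2
  simp only [← e1] at h2
  have h3 := (ENNReal.tendsto_toReal ENNReal.ofReal_ne_top).comp h2
  rw [ENNReal.toReal_ofReal (hl0 a)] at h3
  refine h3.congr fun n => ?_
  simp only [Function.comp]
  exact ENNReal.toReal_ofReal (intervalIntegral.integral_nonneg ht.le
    fun s _ => fR_nonneg hT a n _)

lemma law_eq {Ω : Type*} [MeasurableSpace Ω] {P : Measure Ω} {W : ℝ → Ω → ℝ}
    (hpre : IsPreBrownianReal (fun q : ℝ≥0 => W q) P) (hm : ∀ t, Measurable (W t))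
    (hc : ∀ ω, Continuous fun s => W s ω) (h0 : ∀ ω, W 0 ω = 0)
    {t : ℝ} (ht : 0 < t) (a : ℝ) {T : ℝ → ℝ} (hT : IsMoll T) {Y : Ω → ℝ} (hY : Measurable Y)
    (hlim : ∀ᵐ ω ∂P, Tendsto (fun n => ∫ s in (0:ℝ)..t, fR T a n (W s ω)) atTop (nhds (Y ω))) :
    P.map Y = targetLaw t |a| := by
  have hprob : IsProbabilityMeasure P := hpre.isGaussianProcess.isProbabilityMeasure
  have hj : Measurable (fun p : Ω × ℝ => W p.2 p.1) :=
    (measurable_uncurry_of_continuous_of_measurable hc hm).comp measurable_swap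
  let X : ℕ → Ω → ℝ := fun n ω => ∫ s in (0:ℝ)..t, fR T a n (W s ω)
  have hXc : ∀ n ω, Continuous fun s => fR T a n (W s ω) := fun n ω => (fR_cont hT a n).comp (hc ω)
  have hX0 : ∀ n ω, 0 ≤ X n ω := fun n ω =>
    intervalIntegral.integral_nonneg ht.le fun s _ => fR_nonneg hT a n _
  have hIk : ∀ n k ω, ENNReal.ofReal (X n ω ^ k / k.factorial) =
      Ik (fun r => fE T a n (W r ω)) t k 0 := fun n k ω =>
    (Ik_eq (hXc n ω) (fun r => fR_nonneg hT a n _) t k 0 ht.le).symm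
  have hXm : ∀ n, Measurable (X n) := fun n => by
    have h1 := (measurable_Ik (φ := fun ω r => fE T a n (W r ω)) ((fE_meas hT a n).comp hj) t 1).comp
      (measurable_prodMk_right (y := (0:ℝ)))
    have h2 := h1.ennreal_toReal
    convert h2 using 1
    ext ω
    simp only [Function.comp, ← hIk]
    rw [ENNReal.toReal_ofReal (by have := hX0 n ω; positivity)]
    simp
  have hmom : ∀ n k, ∫⁻ ω, ENNReal.ofReal (X n ω ^ k / k.factorial) ∂P =
      uk (fE T a n) k t 0 := fun n k => by
    have := moment_markov hpre hm hj (fE_meas hT a n) t k 0 le_rfl (fun _ => 1) measurable_const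
    simp only [one_mul, sub_zero, h0, ← hIk] at this
    rw [this]
    simp
  have hle : ∀ n k, uk (fE T a n) k t 0 ≤ Gk k t 0 := fun n k =>
    uk_le (fE_meas hT a n) (fE_supp hT a n) (fE_int hT a n) k t ht 0
  let m : ℕ → ℝ≥0∞ := fun k => if k = 0 then 1 else Gk k t |a|
  have hmle : ∀ k, m k ≤ Gk k t 0 := fun k => by
    by_cases hk : k = 0
    · simp [m, hk, Gk_zero_zero ht]
    · simp only [m, hk, if_false]
      exact Gk_anti k ht.le le_rfl (abs_nonneg a)
  have hsum : ∀ ξ : ℝ, ∑' k, ENNReal.ofReal (|ξ| ^ k) * Gk k t 0 ≠ ∞ := fun ξ =>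
    tsum_Gk_ne_top ht (abs_nonneg ξ)
  have hGfin : ∀ k, Gk k t 0 ≠ ∞ := fun k => Gk_ne_top ht k
  have hbs : ∀ (m' : ℕ → ℝ≥0∞), (∀ k, m' k ≤ Gk k t 0) → ∀ ξ : ℝ,
      ∑' k, ENNReal.ofReal (|ξ| ^ k) * m' k ≠ ∞ := fun m' h ξ =>
    ne_top_of_le_ne_top (hsum ξ) (ENNReal.tsum_le_tsum fun k => mul_le_mul_right (h k) _)
  have hTmom : ∀ k, ∫⁻ y, ENNReal.ofReal (y ^ k / k.factorial) ∂targetLaw t |a| = m k := fun k => by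
    by_cases hk : k = 0
    · subst hk; simp [m]
    · simp only [m, hk, if_false]
      exact moment_targetLaw ht (abs_nonneg a) hk
  have hPY : IsProbabilityMeasure (P.map Y) := Measure.isProbabilityMeasure_map hY.aemeasurable
  apply Measure.ext_of_charFun
  ext ξ
  have c1 : ∀ n, charFun (P.map (X n)) ξ =
      ∑' k, ((ξ : ℂ) * Complex.I) ^ k * ((uk (fE T a n) k t 0).toReal : ℂ) := fun n =>
    charFun_series (hXm n) (hX0 n) (hmom n)
      (fun k => ne_top_of_le_ne_top (hGfin k) (hle n k)) ξ (hbs _ (hle n) ξ)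
  have c2 : charFun (targetLaw t |a|) ξ =
      ∑' k, ((ξ : ℂ) * Complex.I) ^ k * ((m k).toReal : ℂ) := by
    refine charFun_series (P := gaussianReal 0 t.toNNReal) (measurable_max_abs |a|)
      (fun x => le_max_right _ _) (fun k => ?_)
      (fun k => ne_top_of_le_ne_top (hGfin k) (hmle k)) ξ (hbs _ hmle ξ)
    rw [← hTmom k, targetLaw, lintegral_map (by fun_prop) (measurable_max_abs |a|)]
  have l1 : Tendsto (fun n => charFun (P.map (X n)) ξ) atTop (nhds (charFun (targetLaw t |a|) ξ)) := by
    simp only [c1, c2]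
    refine tendsto_tsum_of_dominated_convergence
      (ENNReal.summable_toReal (hsum ξ)) (fun k => ?_) (Eventually.of_forall fun n k => ?_)
    · refine Tendsto.const_mul _ ((Complex.continuous_ofReal.tendsto _).comp
        ((ENNReal.tendsto_toReal (ne_top_of_le_ne_top (hGfin k) (hmle k))).comp ?_))
      by_cases hk : k = 0
      · subst hk; simp only [uk, m, if_true]; exact tendsto_const_nhds
      · have := tendsto_uk hT a k hk ht 0
        simpa [m, hk] using this
    · rw [ENNReal.toReal_mul, ENNReal.toReal_ofReal (by positivity)]
      simp only [norm_mul, norm_pow, Complex.norm_real, Complex.norm_I, mul_one]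
      rw [Real.norm_of_nonneg ENNReal.toReal_nonneg, Real.norm_eq_abs]
      gcongr
      · exact hGfin k
      · exact hle n k
  have l2 : Tendsto (fun n => charFun (P.map (X n)) ξ) atTop (nhds (charFun (P.map Y) ξ)) := by
    simp only [charFun_apply_real]
    rw [integral_map hY.aemeasurable (by fun_prop)]
    have e : ∀ n, ∫ x, Complex.exp (ξ * x * Complex.I) ∂(P.map (X n)) =
        ∫ ω, Complex.exp (ξ * X n ω * Complex.I) ∂P := fun n =>
      integral_map (hXm n).aemeasurable (by fun_prop)
    simp only [e]
    refine tendsto_integral_of_dominated_convergence (fun _ => 1) (fun n => ?_)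
      (integrable_const _) (fun n => ae_of_all _ fun ω => ?_) ?_
    · have := hXm n
      exact Measurable.aestronglyMeasurable (by fun_prop)
    · rw [← Complex.ofReal_mul, Complex.norm_exp_ofReal_mul_I]
    · filter_upwards [hlim] with ω hω
      have hcc : Continuous fun x : ℝ => Complex.exp (ξ * x * Complex.I) := by fun_prop
      exact (hcc.tendsto _).comp hω
  exact tendsto_nhds_unique l2 l1

/-- The distribution of `L_t(a)` on `(0,∞)` has Lebesgue density
`g(y; t, a) = √(2/(πt)) exp(−(y + |a|)²/(2t))`: for every Borel `A ⊆ (0,∞)`,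
`P(L_t(a) ∈ A) = ∫_A g(y; t, a) dy`. -/
theorem local_time_density
    {Ω : Type*} [MeasurableSpace Ω] (P : Measure Ω) (W : ℝ → Ω → ℝ)
    (L : ℝ → ℝ → Ω → ℝ) (hW : IsBrownianMotion P W) (hL : IsLocalTime P W L)
    (t : ℝ) (ht : 0 < t) (a : ℝ) :
    ∀ A : Set ℝ, A ⊆ Ioi 0 → MeasurableSet A →
      P {ω | L t a ω ∈ A} =
        ∫⁻ y in A,
          ENNReal.ofReal
            (Real.sqrt (2 / (Real.pi * t)) *
              Real.exp (-(y + |a|) ^ 2 / (2 * t))) := by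
  intro A hA hAm
  obtain ⟨T, hT⟩ := exists_moll
  obtain ⟨N, hNsub, hNm, hN0⟩ := exists_measurable_superset_of_null (ae_iff.1 hW.cont)
  classical
  let W' : ℝ → Ω → ℝ := fun s ω => if ω ∈ N then 0 else W s ω
  have hNae : ∀ᵐ ω ∂P, ω ∉ N := measure_eq_zero_iff_ae_notMem.1 hN0
  have hm' : ∀ s, Measurable (W' s) := fun s => Measurable.ite hNm measurable_const (hW.meas s)
  have hc' : ∀ ω, Continuous fun s => W' s ω := fun ω => by
    by_cases h : ω ∈ N
    · simp only [W', h, if_true]; exact continuous_const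
    · simp only [W', h, if_false]
      by_contra h'
      exact h (hNsub h')
  have h0' : ∀ ω, W' 0 ω = 0 := fun ω => by
    simp only [W', hW.2, ite_self]
  have hpre : IsPreBrownianReal (fun q : ℝ≥0 => W' q) P := by
    refine hW.pre.congr fun q => ?_
    filter_upwards [hNae] with ω hω
    simp [W', hω]
  have hlaw := law_eq hpre hm' hc' h0' ht a hT (hL.meas t a) (by
    filter_upwards [hNae, hL.cont, hL.occupation] with ω h1 h2 h3
    refine occupation_tendsto hT a t (hc' ω) (l := fun x => L t x ω)
      (h2.comp (by fun_prop : Continuous fun x : ℝ => (t, x))) (fun x => hL.nonneg t x ω) ht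
      (fun B hB => ?_)
    have := h3 t ht.le B hB
    simpa only [W', h1, if_false] using this)
  have e1 : P {ω | L t a ω ∈ A} = targetLaw t |a| A := by
    rw [← hlaw, Measure.map_apply (hL.meas t a) hAm]
    rfl
  have h00 : (0:ℝ) ∉ A := fun h => lt_irrefl (0:ℝ) (hA h)
  have e2 := lintegral_targetLaw (b := |a|) (φ := A.indicator fun _ => 1) ht (abs_nonneg a)
    (measurable_const.indicator hAm) (Or.inr (by simp [h00]))
  rw [lintegral_indicator hAm, setLIntegral_one] at e2
  rw [e1, e2]
  have e3 : (fun y => A.indicator (fun _ => (1 : ℝ≥0∞)) y * (2 * qk t (y + |a|))) =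
      A.indicator (fun y => 2 * qk t (y + |a|)) := by
    ext y
    by_cases h : y ∈ A <;> simp [h]
  rw [e3, setLIntegral_indicator hAm, inter_eq_left.2 hA]
  refine lintegral_congr fun y => ?_
  have hs : Real.sqrt (2 / (Real.pi * t)) = 2 * (√(2 * Real.pi * t))⁻¹ := by
    have hpos : 0 < Real.pi * t := by positivity
    rw [← Real.sqrt_inv]
    rw [show (2:ℝ) * √(2 * Real.pi * t)⁻¹ = √(2 ^ 2) * √(2 * Real.pi * t)⁻¹ by
      rw [Real.sqrt_sq (by norm_num)], ← Real.sqrt_mul (by norm_num)]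
    congr 1
    field_simp
  rw [hs, mul_assoc, ENNReal.ofReal_mul (by norm_num), ENNReal.ofReal_ofNat]
  rfl
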